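/- Suppose q ∈ K is a primitive l-th root of unity with l ≥ 2 and K is a field. Then the center of the rank-one quantized Weyl algebra A₁^q is exactly the K-subalgebra generated by x^l and y^l, and this subalgebra is isomorphic to a polynomial ring in two variables over K. -/

import Mathlib

noncomputable section

/-- Relation defining the rank-one quantized Weyl algebra: x*y - q*(y*x) = 1. -/
inductive WeylRel (K : Type*) [Field K] (q : K) :
    FreeAlgebra K (Fin 2) → FreeAlgebra K (Fin 2) → Prop
  | rel : WeylRel K q (FreeAlgebra.ι K (0 : Fin 2) * FreeAlgebra.ι K 1 -
      algebraMap K _ q * (FreeAlgebra.ι K 1 * FreeAlgebra.ι K 0)) 1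

/-- The rank-one quantized Weyl algebra A₁^q. -/
abbrev Weyl (K : Type*) [Field K] (q : K) := RingQuot (WeylRel K q)

/-- The generator x of A₁^q. -/
def wx (K : Type*) [Field K] (q : K) : Weyl K q :=
  RingQuot.mkAlgHom K (WeylRel K q) (FreeAlgebra.ι K 0)

/-- The generator y of A₁^q. -/
def wy (K : Type*) [Field K] (q : K) : Weyl K q :=
  RingQuot.mkAlgHom K (WeylRel K q) (FreeAlgebra.ι K 1)

namespace WeylAux

variable {K : Type*} [Field K] (q : K)

/-- The q-number [n]. -/
def qn (n : ℕ) : K := ∑ i ∈ Finset.range n, q ^ i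

lemma qn_zero : qn q 0 = 0 := by simp [qn]

lemma qn_succ (n : ℕ) : qn q (n + 1) = q * qn q n + 1 := by
  simp [qn, Finset.sum_range_succ', Finset.mul_sum, pow_succ']

lemma qn_mul (n : ℕ) : qn q n * (1 - q) = 1 - q ^ n := by
  induction n with
  | zero => simp [qn_zero]
  | succ n ih => rw [qn_succ, pow_succ]; linear_combination q * ih

lemma rel : wx K q * wy K q = q • (wy K q * wx K q) + 1 := by
  have h := RingQuot.mkAlgHom_rel K (WeylRel.rel (K := K) (q := q))
  simp only [map_sub, map_mul, map_one, AlgHom.commutes] at h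
  rw [Algebra.smul_def, ← sub_eq_iff_eq_add']
  exact h

lemma x_ypow (n : ℕ) : wx K q * wy K q ^ n =
    q ^ n • (wy K q ^ n * wx K q) + qn q n • wy K q ^ (n - 1) := by
  induction n with
  | zero => simp [qn_zero]
  | succ n ih =>
    rw [pow_succ' (wy K q) n, ← mul_assoc, rel, add_mul, smul_mul_assoc, mul_assoc, ih, qn_succ]
    rcases n with _ | n
    · simp [qn_zero]
    · simp only [mul_add, mul_smul_comm, Nat.add_sub_cancel, ← pow_succ', ← mul_assoc]
      simp only [smul_add, smul_smul, add_smul, one_smul, one_mul, pow_succ' q]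
      abel

lemma xpow_y (n : ℕ) : wx K q ^ n * wy K q =
    q ^ n • (wy K q * wx K q ^ n) + qn q n • wx K q ^ (n - 1) := by
  induction n with
  | zero => simp [qn_zero]
  | succ n ih =>
    rw [pow_succ (wx K q) n, mul_assoc, rel, mul_add, mul_smul_comm, ← mul_assoc, ih, qn_succ]
    rcases n with _ | n
    · simp [qn_zero]
    · simp only [add_mul, smul_mul_assoc, Nat.add_sub_cancel, ← pow_succ, mul_assoc]
      simp only [smul_add, smul_smul, add_smul, one_smul, mul_one, pow_succ' q]
      abel

/-- Left multiplication by y on coordinates. -/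
def opY : (ℕ × ℕ →₀ K) →ₗ[K] (ℕ × ℕ →₀ K) :=
  Finsupp.linearCombination K (fun p => Finsupp.single (p.1 + 1, p.2) (1 : K))

/-- Left multiplication by x on coordinates. -/
def opX : (ℕ × ℕ →₀ K) →ₗ[K] (ℕ × ℕ →₀ K) :=
  Finsupp.linearCombination K (fun p => Finsupp.single (p.1, p.2 + 1) (q ^ p.1) +
    Finsupp.single (p.1 - 1, p.2) (qn q p.1))

/-- Right multiplication by x on coordinates. -/
def opX' : (ℕ × ℕ →₀ K) →ₗ[K] (ℕ × ℕ →₀ K) :=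
  Finsupp.linearCombination K (fun p => Finsupp.single (p.1, p.2 + 1) (1 : K))

/-- Right multiplication by y on coordinates. -/
def opY' : (ℕ × ℕ →₀ K) →ₗ[K] (ℕ × ℕ →₀ K) :=
  Finsupp.linearCombination K (fun p => Finsupp.single (p.1 + 1, p.2) (q ^ p.2) +
    Finsupp.single (p.1, p.2 - 1) (qn q p.2))

/-- Coordinates to elements. -/
def Psi : (ℕ × ℕ →₀ K) →ₗ[K] Weyl K q :=
  Finsupp.linearCombination K (fun p => wy K q ^ p.1 * wx K q ^ p.2)

lemma Psi_single (p : ℕ × ℕ) (c : K) :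
    Psi q (Finsupp.single p c) = c • (wy K q ^ p.1 * wx K q ^ p.2) := by
  simp [Psi]

lemma op_rel : opX q * opY = q • (opY * opX q) + 1 := by
  ext ⟨a, b⟩ : 2
  rcases a with _ | a
  · ext p
    simp [opX, opY, qn_zero, qn_succ]
  · ext p
    simp only [opX, opY, qn_succ q (a + 1), pow_succ' q, Finsupp.lsingle_apply,
      LinearMap.comp_apply, Module.End.mul_apply, LinearMap.add_apply, LinearMap.smul_apply,
      Finsupp.linearCombination_single, map_add, one_smul, Module.End.one_apply,
      Finsupp.add_apply, Finsupp.smul_apply, Finsupp.single_apply, smul_eq_mul,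
      Nat.add_sub_cancel]
    split_ifs <;> ring

lemma gen_rel {A : Type*} [Ring A] [Algebra K A] (q : K) (x y : A)
    (h : x * y = q • (y * x) + 1) : x * y - algebraMap K A q * (y * x) = 1 := by
  rw [sub_eq_iff_eq_add', ← Algebra.smul_def]
  exact h

lemma op_rel' : (opX q : Module.End K (ℕ × ℕ →₀ K)) * opY -
    algebraMap K (Module.End K (ℕ × ℕ →₀ K)) q * (opY * opX q) = 1 := by
  exact gen_rel (A := Module.End K (ℕ × ℕ →₀ K)) q _ _ (op_rel q)

/-- The representation. -/
def rho : Weyl K q →ₐ[K] Module.End K (ℕ × ℕ →₀ K) :=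
  RingQuot.liftAlgHom K ⟨FreeAlgebra.lift K ![opX q, opY], by
    rintro _ _ ⟨⟩
    simp only [map_sub, map_mul, map_one, AlgHom.commutes, FreeAlgebra.lift_ι_apply]
    exact op_rel' q⟩

lemma rho_x : rho q (wx K q) = opX q := by
  simp [rho, wx]

lemma rho_y : rho q (wy K q) = opY := by
  simp [rho, wy]

lemma Psi_opX (f : ℕ × ℕ →₀ K) : Psi q (opX q f) = wx K q * Psi q f := by
  induction f using Finsupp.induction_linear with
  | zero => simp
  | add f g hf hg => simp only [map_add, mul_add, hf, hg]
  | single p c =>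
    obtain ⟨a, b⟩ := p
    simp only [opX, Finsupp.linearCombination_single, map_smul, map_add, Psi_single,
      mul_smul_comm]
    rw [← mul_assoc, x_ypow]
    simp only [add_mul, smul_mul_assoc, mul_assoc, ← pow_succ']

lemma Psi_opY (f : ℕ × ℕ →₀ K) : Psi q (opY f) = wy K q * Psi q f := by
  induction f using Finsupp.induction_linear with
  | zero => simp
  | add f g hf hg => simp only [map_add, mul_add, hf, hg]
  | single p c =>
    simp only [opY, Finsupp.linearCombination_single, map_smul, Psi_single,
      mul_smul_comm, one_smul, pow_succ', mul_assoc]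

lemma Psi_opX' (f : ℕ × ℕ →₀ K) : Psi q (opX' f) = Psi q f * wx K q := by
  induction f using Finsupp.induction_linear with
  | zero => simp
  | add f g hf hg => simp only [map_add, add_mul, hf, hg]
  | single p c =>
    simp only [opX', Finsupp.linearCombination_single, map_smul, Psi_single,
      smul_mul_assoc, one_smul, pow_succ, mul_assoc]

lemma Psi_opY' (f : ℕ × ℕ →₀ K) : Psi q (opY' q f) = Psi q f * wy K q := by
  induction f using Finsupp.induction_linear with
  | zero => simp
  | add f g hf hg => simp only [map_add, add_mul, hf, hg]
  | single p c =>
    obtain ⟨a, b⟩ := p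
    simp only [opY', Finsupp.linearCombination_single, map_smul, map_add, Psi_single,
      smul_mul_assoc]
    rw [mul_assoc, xpow_y]
    simp only [mul_add, mul_smul_comm, ← mul_assoc, ← pow_succ]

lemma weyl_induction {P : Weyl K q → Prop} (hc : ∀ c : K, P (algebraMap K _ c))
    (hx : P (wx K q)) (hy : P (wy K q)) (hm : ∀ a b, P a → P b → P (a * b))
    (ha : ∀ a b, P a → P b → P (a + b)) (w : Weyl K q) : P w := by
  obtain ⟨w, rfl⟩ := RingQuot.mkAlgHom_surjective K (WeylRel K q) w
  induction w using FreeAlgebra.induction with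
  | grade0 r => simpa using hc r
  | grade1 i =>
    fin_cases i
    · exact hx
    · exact hy
  | mul a b h1 h2 => rw [map_mul]; exact hm _ _ h1 h2
  | add a b h1 h2 => rw [map_add]; exact ha _ _ h1 h2

lemma Psi_rho (w : Weyl K q) : ∀ f, Psi q (rho q w f) = w * Psi q f := by
  induction w using weyl_induction with
  | hc c => intro f; simp [Algebra.algebraMap_eq_smul_one]
  | hx => intro f; rw [rho_x, Psi_opX]
  | hy => intro f; rw [rho_y, Psi_opY]
  | hm a b h1 h2 => intro f; rw [map_mul, Module.End.mul_apply, h1, h2, mul_assoc]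
  | ha a b h1 h2 => intro f; rw [map_add, LinearMap.add_apply, map_add, h1, h2, add_mul]

/-- Elements to coordinates. -/
def Phi : Weyl K q →ₗ[K] (ℕ × ℕ →₀ K) :=
  (LinearMap.applyₗ (Finsupp.single ((0, 0) : ℕ × ℕ) (1 : K))).comp (rho q).toLinearMap

lemma Phi_apply (w : Weyl K q) : Phi q w = rho q w (Finsupp.single (0, 0) 1) := rfl

lemma Psi_Phi (w : Weyl K q) : Psi q (Phi q w) = w := by
  rw [Phi_apply, Psi_rho, Psi_single]; simp

lemma opX_pow (b : ℕ) : (opX q ^ b) (Finsupp.single (0, 0) 1) = Finsupp.single (0, b) 1 := by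
  induction b with
  | zero => simp
  | succ b ih => rw [pow_succ', Module.End.mul_apply, ih]; simp [opX, qn_zero]

lemma opY_pow (a b : ℕ) : ((opY (K := K)) ^ a) (Finsupp.single (0, b) 1)
    = Finsupp.single (a, b) 1 := by
  induction a with
  | zero => simp
  | succ b ih => rw [pow_succ', Module.End.mul_apply, ih]; simp [opY]

lemma Phi_mon (a b : ℕ) : Phi q (wy K q ^ a * wx K q ^ b) = Finsupp.single (a, b) 1 := by
  rw [Phi_apply, map_mul, map_pow, map_pow, rho_x, rho_y, Module.End.mul_apply, opX_pow, opY_pow]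

lemma Phi_Psi (f : ℕ × ℕ →₀ K) : Phi q (Psi q f) = f := by
  induction f using Finsupp.induction_linear with
  | zero => simp
  | add f g hf hg => simp only [map_add, hf, hg]
  | single p c => rw [Psi_single, map_smul, Phi_mon]; simp

lemma Psi_inj : Function.Injective (Psi q) :=
  Function.LeftInverse.injective (Phi_Psi q)

lemma opX_coeff (f : ℕ × ℕ →₀ K) (a b : ℕ) :
    opX q f (a, b + 1) = q ^ a * f (a, b) + qn q (a + 1) * f (a + 1, b + 1) := by
  induction f using Finsupp.induction_linear with
  | zero => simp
  | add f g hf hg => simp only [map_add, Finsupp.add_apply, hf, hg]; ring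
  | single p c =>
    obtain ⟨m, n⟩ := p
    rcases m with _ | m <;> rcases a with _ | a <;>
    · simp only [opX, Finsupp.linearCombination_single, Finsupp.smul_apply, Finsupp.add_apply,
        Finsupp.single_apply, Prod.mk.injEq, smul_eq_mul, qn_zero, pow_zero]
      grind

lemma opX_coeff_zero (f : ℕ × ℕ →₀ K) (a : ℕ) :
    opX q f (a, 0) = qn q (a + 1) * f (a + 1, 0) := by
  induction f using Finsupp.induction_linear with
  | zero => simp
  | add f g hf hg => simp only [map_add, Finsupp.add_apply, hf, hg]; ring
  | single p c =>
    obtain ⟨m, n⟩ := p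
    rcases m with _ | m <;>
    · simp only [opX, Finsupp.linearCombination_single, Finsupp.smul_apply, Finsupp.add_apply,
        Finsupp.single_apply, Prod.mk.injEq, smul_eq_mul, qn_zero]
      grind

lemma opY'_coeff (f : ℕ × ℕ →₀ K) (a b : ℕ) :
    opY' q f (a + 1, b) = q ^ b * f (a, b) + qn q (b + 1) * f (a + 1, b + 1) := by
  induction f using Finsupp.induction_linear with
  | zero => simp
  | add f g hf hg => simp only [map_add, Finsupp.add_apply, hf, hg]; ring
  | single p c =>
    obtain ⟨m, n⟩ := p
    rcases n with _ | n <;> rcases b with _ | b <;>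
    · simp only [opY', Finsupp.linearCombination_single, Finsupp.smul_apply, Finsupp.add_apply,
        Finsupp.single_apply, Prod.mk.injEq, smul_eq_mul, qn_zero, pow_zero]
      grind

lemma opY'_coeff_zero (f : ℕ × ℕ →₀ K) (b : ℕ) :
    opY' q f (0, b) = qn q (b + 1) * f (0, b + 1) := by
  induction f using Finsupp.induction_linear with
  | zero => simp
  | add f g hf hg => simp only [map_add, Finsupp.add_apply, hf, hg]; ring
  | single p c =>
    obtain ⟨m, n⟩ := p
    rcases n with _ | n <;>
    · simp only [opY', Finsupp.linearCombination_single, Finsupp.smul_apply, Finsupp.add_apply,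
        Finsupp.single_apply, Prod.mk.injEq, smul_eq_mul, qn_zero]
      grind

lemma opX'_coeff (f : ℕ × ℕ →₀ K) (a b : ℕ) :
    opX' f (a, b + 1) = f (a, b) ∧ opX' f (a, 0) = 0 := by
  induction f using Finsupp.induction_linear with
  | zero => simp
  | add f g hf hg => simp only [map_add, Finsupp.add_apply, hf, hg]; simp
  | single p c => simp [opX', Finsupp.single_apply, Prod.ext_iff]

lemma opY_coeff (f : ℕ × ℕ →₀ K) (a b : ℕ) :
    opY f (a + 1, b) = f (a, b) ∧ opY f (0, b) = 0 := by
  induction f using Finsupp.induction_linear with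
  | zero => simp
  | add f g hf hg => simp only [map_add, Finsupp.add_apply, hf, hg]; simp
  | single p c => simp [opY, Finsupp.single_apply, Prod.ext_iff]

lemma central_x (f : ℕ × ℕ →₀ K) (h : opX q f = opX' f) (a b : ℕ) :
    qn q a * f (a, b) = 0 := by
  induction b generalizing a with
  | zero =>
    rcases a with _ | a
    · simp [qn_zero]
    · rw [← opX_coeff_zero, h, (opX'_coeff f a 0).2]
  | succ b ih =>
    rcases a with _ | a
    · simp [qn_zero]
    · have h1 := opX_coeff q f a b
      rw [h, (opX'_coeff f a b).1] at h1
      linear_combination (1 - q) * ih a - h1 - f (a, b) * qn_mul q a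

lemma central_y (f : ℕ × ℕ →₀ K) (h : opY' q f = opY f) (a b : ℕ) :
    qn q b * f (a, b) = 0 := by
  induction a generalizing b with
  | zero =>
    rcases b with _ | b
    · simp [qn_zero]
    · rw [← opY'_coeff_zero, h, (opY_coeff f 0 b).2]
  | succ a ih =>
    rcases b with _ | b
    · simp [qn_zero]
    · have h1 := opY'_coeff q f a b
      rw [h, (opY_coeff f a b).1] at h1
      linear_combination (1 - q) * ih b - h1 - f (a, b) * qn_mul q b

variable {q} {l : ℕ}

lemma dvd_of_qn (hq : IsPrimitiveRoot q l) (n : ℕ) (h : qn q n = 0) : l ∣ n := by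
  have := qn_mul q n
  rw [h, zero_mul] at this
  exact hq.dvd_of_pow_eq_one n (sub_eq_zero.1 this.symm).symm

lemma qn_l (hl : 2 ≤ l) (hq : IsPrimitiveRoot q l) : qn q l = 0 :=
  hq.geom_sum_eq_zero hl

lemma mem_center_of (w : Weyl K q) (hx : wx K q * w = w * wx K q)
    (hy : wy K q * w = w * wy K q) : w ∈ Subalgebra.center K (Weyl K q) := by
  rw [Subalgebra.mem_center_iff]
  intro b
  induction b using weyl_induction with
  | hc c => exact Algebra.commutes c w
  | hx => exact hx
  | hy => exact hy
  | hm a b h1 h2 => rw [mul_assoc, h2, ← mul_assoc, h1, mul_assoc]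
  | ha a b h1 h2 => rw [add_mul, mul_add, h1, h2]

lemma xl_mem (hl : 2 ≤ l) (hq : IsPrimitiveRoot q l) :
    wx K q ^ l ∈ Subalgebra.center K (Weyl K q) := by
  apply mem_center_of
  · rw [← pow_succ, ← pow_succ']
  · rw [xpow_y, qn_l hl hq, hq.pow_eq_one]; simp

lemma yl_mem (hl : 2 ≤ l) (hq : IsPrimitiveRoot q l) :
    wy K q ^ l ∈ Subalgebra.center K (Weyl K q) := by
  apply mem_center_of
  · rw [x_ypow, qn_l hl hq, hq.pow_eq_one]; simp
  · rw [← pow_succ, ← pow_succ']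

lemma center_le (hq : IsPrimitiveRoot q l) :
    Subalgebra.center K (Weyl K q) ≤ Algebra.adjoin K {wx K q ^ l, wy K q ^ l} := by
  intro w hw
  rw [Subalgebra.mem_center_iff] at hw
  have hX : opX q (Phi q w) = opX' (Phi q w) := by
    apply Psi_inj q
    rw [Psi_opX, Psi_opX', Psi_Phi, hw]
  have hY : opY' q (Phi q w) = opY (Phi q w) := by
    apply Psi_inj q
    rw [Psi_opY, Psi_opY', Psi_Phi, hw]
  rw [← Psi_Phi q w, Psi, Finsupp.linearCombination_apply]
  refine Subalgebra.sum_mem _ fun p hp => Subalgebra.smul_mem _ ?_ _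
  obtain ⟨a, b⟩ := p
  have hp' := Finsupp.mem_support_iff.1 hp
  obtain ⟨a, rfl⟩ := dvd_of_qn hq a ((mul_eq_zero.1 (central_x q _ hX a b)).resolve_right hp')
  obtain ⟨b, rfl⟩ := dvd_of_qn hq b ((mul_eq_zero.1 (central_y q _ hY _ b)).resolve_right hp')
  simp only [pow_mul]
  refine Subalgebra.mul_mem _ (Subalgebra.pow_mem _ ?_ _) (Subalgebra.pow_mem _ ?_ _) <;>
  · apply Algebra.subset_adjoin
    simp

lemma center_eq (hl : 2 ≤ l) (hq : IsPrimitiveRoot q l) :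
    Subalgebra.center K (Weyl K q) = Algebra.adjoin K {wx K q ^ l, wy K q ^ l} := by
  refine le_antisymm (center_le hq) (Algebra.adjoin_le ?_)
  rintro _ (rfl | rfl)
  · exact xl_mem hl hq
  · exact yl_mem hl hq

/-- The map from the polynomial ring to the center. -/
def toCenter (hl : 2 ≤ l) (hq : IsPrimitiveRoot q l) :
    MvPolynomial (Fin 2) K →ₐ[K] Subalgebra.center K (Weyl K q) :=
  MvPolynomial.aeval ![⟨_, xl_mem hl hq⟩, ⟨_, yl_mem hl hq⟩]

lemma toCenter_monomial (hl : 2 ≤ l) (hq : IsPrimitiveRoot q l) (m : Fin 2 →₀ ℕ) (c : K) :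
    (toCenter hl hq (MvPolynomial.monomial m c) : Weyl K q)
      = c • (wy K q ^ (l * m 1) * wx K q ^ (l * m 0)) := by
  rw [toCenter, MvPolynomial.aeval_monomial, Finsupp.prod_fintype _ _ (by simp),
    Fin.prod_univ_two, mul_comm (_ ^ _) (_ ^ _), ← Algebra.smul_def]
  simp [pow_mul]

lemma toCenter_coeff (hl : 2 ≤ l) (hq : IsPrimitiveRoot q l) (m : Fin 2 →₀ ℕ)
    (p : MvPolynomial (Fin 2) K) :
    Phi q (toCenter hl hq p : Weyl K q) (l * m 1, l * m 0) = p.coeff m := by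
  induction p using MvPolynomial.induction_on' with
  | monomial n c =>
    rw [toCenter_monomial, map_smul, Phi_mon, MvPolynomial.coeff_monomial]
    have hl0 : l ≠ 0 := by omega
    have : n = m ↔ (n 1 = m 1 ∧ n 0 = m 0) := by
      rw [Finsupp.ext_iff, Fin.forall_fin_two, and_comm]
    simp [Finsupp.single_apply, this, hl0]
  | add f g hf hg =>
    rw [map_add, MvPolynomial.coeff_add, ← hf, ← hg]
    simp

lemma toCenter_bijective (hl : 2 ≤ l) (hq : IsPrimitiveRoot q l) :
    Function.Bijective (toCenter hl hq) := by
  constructor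
  · intro f g h
    ext m
    rw [← toCenter_coeff hl hq, ← toCenter_coeff hl hq, h]
  · rintro ⟨w, hw⟩
    have h1 : Algebra.adjoin K {wx K q ^ l, wy K q ^ l} ≤
        ((Subalgebra.center K (Weyl K q)).val.comp (toCenter hl hq)).range := by
      apply Algebra.adjoin_le
      rintro _ (rfl | rfl)
      · exact ⟨MvPolynomial.X 0, by simp [toCenter]⟩
      · exact ⟨MvPolynomial.X 1, by simp [toCenter]⟩
    obtain ⟨p, hp⟩ := h1 (center_le hq hw)
    exact ⟨p, Subtype.ext hp⟩

end WeylAux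

/-- If q is a primitive l-th root of unity (l ≥ 2), the center of A₁^q is the
K-subalgebra generated by x^l and y^l, and this subalgebra is isomorphic to a
polynomial ring in two variables over K. -/
theorem weyl_center (K : Type*) [Field K] [IsAlgClosed K] (q : K) (l : ℕ) (hl : 2 ≤ l)
    (hq : IsPrimitiveRoot q l) :
    Subalgebra.center K (Weyl K q) = Algebra.adjoin K {wx K q ^ l, wy K q ^ l} ∧
      Nonempty ((Algebra.adjoin K {wx K q ^ l, wy K q ^ l} : Subalgebra K (Weyl K q))
        ≃ₐ[K] MvPolynomial (Fin 2) K) := by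
  refine ⟨WeylAux.center_eq hl hq, ?_⟩
  rw [← WeylAux.center_eq hl hq]
  exact ⟨(AlgEquiv.ofBijective _ (WeylAux.toCenter_bijective hl hq)).symm⟩
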